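/- arXiv:2411.14538 — 2 statements merged into one kernel-verified Lean document; each statement's English description precedes it below -/
import Mathlib

section
/- Every language over a one-letter alphabet {a} recognized by a one-way reversible automaton with multiple initial states (MRFA) is the union of a language recognized by a one-way permutation automaton (1PerFA) and a finite language. -/
open scoped Classical

/-- Run a partial transition function along a word. -/
def runP {A Q : Type} (d : A → Q → Option Q) (q : Q) (w : List A) : Option Q :=
  w.foldl (fun o a => o.bind (d a)) (some q)

/-- One-way reversible finite automaton (1RFA): a partial deterministic automaton
with a single initial state and injective transition functions. -/
structure RFA (A Q : Type) where
  start : Q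
  next : A → Q → Option Q
  inj : ∀ a q q' r, next a q = some r → next a q' = some r → q = q'
  accept : Set Q

def RFA.Language {A Q : Type} (M : RFA A Q) : Set (List A) :=
  {w | ∃ qf ∈ M.accept, runP M.next M.start w = some qf}

/-- A permutation automaton (1PerFA): every transition function is a totally
defined bijection. -/
def RFA.IsPerm {A Q : Type} (M : RFA A Q) : Prop :=
  (∀ a q, (M.next a q).isSome) ∧ ∀ a r, ∃ q, M.next a q = some r

/-- One-way reversible finite automaton with multiple initial states (MRFA). -/
structure MRFA (A Q : Type) where
  init : Set Q
  next : A → Q → Option Q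
  inj : ∀ a q q' r, next a q = some r → next a q' = some r → q = q'
  accept : Set Q

def MRFA.Language {A Q : Type} (M : MRFA A Q) : Set (List A) :=
  {w | ∃ q0 ∈ M.init, ∃ qf ∈ M.accept, runP M.next q0 w = some qf}

def Rec1RFA (A : Type) (L : Set (List A)) : Prop :=
  ∃ (Q : Type) (_ : Fintype Q) (M : RFA A Q), M.Language = L

def Rec1RFA1 (A : Type) (L : Set (List A)) : Prop :=
  ∃ (Q : Type) (_ : Fintype Q) (M : RFA A Q), M.accept.ncard = 1 ∧ M.Language = L

def Rec1PerFA (A : Type) (L : Set (List A)) : Prop :=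
  ∃ (Q : Type) (_ : Fintype Q) (M : RFA A Q), M.IsPerm ∧ M.Language = L

def Rec1PerFA1 (A : Type) (L : Set (List A)) : Prop :=
  ∃ (Q : Type) (_ : Fintype Q) (M : RFA A Q),
    M.IsPerm ∧ M.accept.ncard = 1 ∧ M.Language = L

def RecMRFA (A : Type) (L : Set (List A)) : Prop :=
  ∃ (Q : Type) (_ : Fintype Q) (M : MRFA A Q), M.Language = L

/-- Sweeping reversible automaton (sRFA), given without its accepting set:
states `Qp` move rightwards, states `Qm` move leftwards; `startT` is the
transition of the left end-marker function on the initial state, `turnL` its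
restriction to `Qm`, and `turnR` is the transition function at the right
end-marker.  All transition functions are partial and injective, and the left
end-marker function is injective on the whole of `{q₀} ∪ Q₋`. -/
structure SRFA (A Qp Qm : Type) where
  start : Qp
  nextP : A → Qp → Option Qp
  nextM : A → Qm → Option Qm
  startT : Option Qp
  turnL : Qm → Option Qp
  turnR : Qp → Option Qm
  injP : ∀ a q q' r, nextP a q = some r → nextP a q' = some r → q = q'
  injM : ∀ a q q' r, nextM a q = some r → nextM a q' = some r → q = q'
  injL : ∀ q q' r, turnL q = some r → turnL q' = some r → q = q'
  injR : ∀ q q' r, turnR q = some r → turnR q' = some r → q = q'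
  startT_ne_turnL : ∀ q r, startT = some r → turnL q ≠ some r

/-- One step of a sweeping automaton on input `⊢w⊣`: a configuration is a state
together with a head position in `{0, 1, …, |w| + 1}`, where position `0` is the
left end-marker, position `i` with `1 ≤ i ≤ |w|` carries the `i`-th input
symbol, and position `|w| + 1` is the right end-marker.  The result is `none`
when the corresponding transition is undefined and the computation halts. -/
noncomputable def SRFA.step {A Qp Qm : Type} (M : SRFA A Qp Qm) (w : List A) :
    (Qp ⊕ Qm) × ℕ → Option ((Qp ⊕ Qm) × ℕ)
  | (Sum.inl q, i) =>
      if i = 0 then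
        if q = M.start then M.startT.map (fun p => (Sum.inl p, 1)) else none
      else if i = w.length + 1 then
        (M.turnR q).map (fun r => (Sum.inr r, w.length))
      else
        (w[i - 1]?.bind (fun a => M.nextP a q)).map (fun p => (Sum.inl p, i + 1))
  | (Sum.inr q, i) =>
      if i = 0 then (M.turnL q).map (fun p => (Sum.inl p, 1))
      else if i = w.length + 1 then none
      else (w[i - 1]?.bind (fun a => M.nextM a q)).map (fun r => (Sum.inr r, i - 1))

/-- The configuration reached after `n` steps of the computation on `w`,
starting in the initial state at the left end-marker (or `none` if the
computation has halted before). -/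
noncomputable def SRFA.steps {A Qp Qm : Type} (M : SRFA A Qp Qm) (w : List A) :
    ℕ → Option ((Qp ⊕ Qm) × ℕ)
  | 0 => some (Sum.inl M.start, 0)
  | n + 1 => (M.steps w n).bind (M.step w)

/-- Acceptance of an ordinary sRFA: the computation halts at the right
end-marker in an accepting state `q ∈ F ⊆ Q₊`. -/
def SRFA.AcceptsR {A Qp Qm : Type} (M : SRFA A Qp Qm) (F : Set Qp) (w : List A) : Prop :=
  ∃ n q, M.steps w n = some (Sum.inl q, w.length + 1) ∧ q ∈ F ∧
    M.step w (Sum.inl q, w.length + 1) = none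

def SRFA.LangR {A Qp Qm : Type} (M : SRFA A Qp Qm) (F : Set Qp) : Set (List A) :=
  {w | M.AcceptsR F w}

/-- Acceptance of an sRFA with acceptance at both sides: the computation halts
at either end-marker in an accepting state `c ∈ F ⊆ Q₊ ∪ Q₋`. -/
def SRFA.AcceptsB {A Qp Qm : Type} (M : SRFA A Qp Qm) (F : Set (Qp ⊕ Qm)) (w : List A) : Prop :=
  ∃ n c i, M.steps w n = some (c, i) ∧ c ∈ F ∧ (i = 0 ∨ i = w.length + 1) ∧
    M.step w (c, i) = none

def SRFA.LangB {A Qp Qm : Type} (M : SRFA A Qp Qm) (F : Set (Qp ⊕ Qm)) : Set (List A) :=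
  {w | M.AcceptsB F w}

def RecSRFA (A : Type) (L : Set (List A)) : Prop :=
  ∃ (Qp Qm : Type) (_ : Fintype Qp) (_ : Fintype Qm) (M : SRFA A Qp Qm) (F : Set Qp),
    M.LangR F = L

/-!
A partial injection of a finite set decomposes that set into cycles and chains. Starting on a
cycle, the lengths of the computations that end in a given set are periodic; starting on a chain,
every computation dies, so there are only finitely many such lengths. All cycle lengths divide one
common factorial `m`, so a single cyclic automaton with `m` states handles all initial states that
lie on cycles, whatever their number.
-/

open Function Set

section PartialMaps

variable {Q : Type*}

/-- Injectivity of a partial map on its domain, the condition imposed on the transitions of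
reversible automata. -/
def PartialInjective (f : Q → Option Q) : Prop :=
  ∀ q q' r, f q = some r → f q' = some r → q = q'

/-- The total map on `Option Q` induced by a partial map on `Q`, with `none` as a dead state. It
allows computations to be treated as orbits of a total map. -/
def strictExtension (f : Q → Option Q) (o : Option Q) : Option Q :=
  o.bind f

/-- The lengths of the computations of `f` that start in `X` and end in `Y`. For an automaton
whose transitions do not depend on the letter read, they determine the accepted language. -/
def computationLengths (f : Q → Option Q) (X Y : Set Q) : Set ℕ :=
  {n | ∃ q ∈ X, ∃ r ∈ Y, (strictExtension f)^[n] (some q) = some r}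

theorem iterate_strictExtension_none (f : Q → Option Q) (n : ℕ) :
    (strictExtension f)^[n] none = none :=
  iterate_fixed rfl n

theorem PartialInjective.eq_of_iterate_strictExtension_eq_some {f : Q → Option Q}
    (hf : PartialInjective f) {n : ℕ} {x y : Option Q} {r : Q}
    (hx : (strictExtension f)^[n] x = some r) (hy : (strictExtension f)^[n] y = some r) :
    x = y := by
  induction n generalizing r with
  | zero => exact hx.trans hy.symm
  | succ n ih =>
    rw [iterate_succ_apply'] at hx hy
    obtain ⟨p, hxp, hpr⟩ := Option.bind_eq_some_iff.1 hx
    obtain ⟨p', hyp', hpr'⟩ := Option.bind_eq_some_iff.1 hy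
    obtain rfl := hf p p' r hpr hpr'
    exact ih hxp hyp'

theorem PartialInjective.exists_iterate_eq_none_of_notMem_periodicPts [Finite Q]
    {f : Q → Option Q} (hf : PartialInjective f) {x : Option Q}
    (hx : x ∉ periodicPts (strictExtension f)) :
    ∃ n, (strictExtension f)^[n] x = none := by
  obtain ⟨i, j, hlt, heq⟩ :=
    finite_univ.exists_lt_map_eq_of_forall_mem fun n => mem_univ ((strictExtension f)^[n] x)
  refine ⟨i, ?_⟩
  by_contra hsome
  obtain ⟨r, hr⟩ := Option.ne_none_iff_exists'.1 hsome
  have hshift : (strictExtension f)^[i] ((strictExtension f)^[j - i] x) = some r := by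
    rw [← iterate_add_apply, Nat.add_sub_cancel' hlt.le, ← heq, hr]
  exact hx (mk_mem_periodicPts (Nat.sub_pos_of_lt hlt)
    (hf.eq_of_iterate_strictExtension_eq_some hshift hr))

theorem computationLengths_union_left (f : Q → Option Q) (X₁ X₂ Y : Set Q) :
    computationLengths f (X₁ ∪ X₂) Y =
      computationLengths f X₁ Y ∪ computationLengths f X₂ Y := by
  ext n
  simp only [computationLengths, mem_union, mem_ofPred_eq, or_and_right, exists_or]

theorem periodic_mem_computationLengths {f : Q → Option Q} {X : Set Q} {m : ℕ}
    (hX : ∀ q ∈ X, IsPeriodicPt (strictExtension f) m (some q)) (Y : Set Q) :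
    Periodic (· ∈ computationLengths f X Y) m := by
  intro n
  refine propext (exists_congr fun q => and_congr_right fun hq => ?_)
  rw [iterate_add_apply, (hX q hq).eq]

theorem finite_computationLengths {f : Q → Option Q} {X : Set Q} (hX : X.Finite)
    (hdead : ∀ q ∈ X, ∃ n, (strictExtension f)^[n] (some q) = none) (Y : Set Q) :
    (computationLengths f X Y).Finite := by
  choose! N hN using hdead
  refine (hX.biUnion fun q _ => finite_Iio (N q)).subset ?_
  rintro n ⟨q, hq, r, -, hr⟩
  refine mem_biUnion hq (lt_of_not_ge fun hle : N q ≤ n => ?_)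
  rw [← Nat.sub_add_cancel hle, iterate_add_apply, hN q hq, iterate_strictExtension_none] at hr
  exact Option.some_ne_none r hr.symm

end PartialMaps

section Automata

variable {A Q : Type}

theorem runP_const (f : Q → Option Q) (q : Q) (w : List A) :
    runP (fun _ => f) q w = (strictExtension f)^[w.length] (some q) :=
  List.foldl_const _ _ _

theorem MRFA.language_of_next_eq_const {M : MRFA A Q} {f : Q → Option Q}
    (hM : M.next = fun _ => f) :
    M.Language = List.length ⁻¹' computationLengths f M.init M.accept := by
  ext w
  simp only [MRFA.Language, computationLengths, mem_ofPred_eq, mem_preimage, hM, runP_const]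

/-- The permutation automaton on `ZMod m` that counts the letters read modulo `m` and accepts at
the residues in `F`. -/
def cyclicAutomaton (A : Type) (m : ℕ) (F : Set (ZMod m)) : RFA A (ZMod m) where
  start := 0
  next _ x := some (x + 1)
  inj _ _ _ _ h h' := add_right_cancel (Option.some.inj (h.trans h'.symm))
  accept := F

theorem cyclicAutomaton_isPerm (m : ℕ) (F : Set (ZMod m)) : (cyclicAutomaton A m F).IsPerm :=
  ⟨fun _ _ => rfl, fun _ r => ⟨r - 1, congrArg some (sub_add_cancel r 1)⟩⟩

theorem runP_cyclicAutomaton (m : ℕ) (F : Set (ZMod m)) (w : List A) :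
    runP (cyclicAutomaton A m F).next (cyclicAutomaton A m F).start w =
      some (w.length : ZMod m) := by
  refine (runP_const _ _ w).trans ?_
  induction w.length with
  | zero => exact congrArg some Nat.cast_zero.symm
  | succ n ih => rw [iterate_succ_apply', ih, Nat.cast_succ]; rfl

theorem language_cyclicAutomaton (m : ℕ) (F : Set (ZMod m)) :
    (cyclicAutomaton A m F).Language = {w | (w.length : ZMod m) ∈ F} := by
  ext w
  simp only [RFA.Language, mem_ofPred_eq, runP_cyclicAutomaton, Option.some.injEq,
    exists_eq_right']
  rfl

theorem rec1PerFA_length_preimage {m : ℕ} [NeZero m] {S : Set ℕ} (hS : Periodic (· ∈ S) m) :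
    Rec1PerFA A (List.length ⁻¹' S) := by
  refine ⟨ZMod m, inferInstance, cyclicAutomaton A m (ZMod.val ⁻¹' S),
    cyclicAutomaton_isPerm m _, ?_⟩
  ext w
  rw [language_cyclicAutomaton, mem_ofPred_eq, mem_preimage, mem_preimage, ZMod.val_natCast]
  exact (hS.map_mod_nat w.length).to_iff

end Automata

/-- every unary language recognized by an MRFA is the union of a
language recognized by a 1PerFA and a finite language. -/
theorem stmt14 (L : Set (List Unit)) (h : RecMRFA Unit L) :
    ∃ P Lf : Set (List Unit), Rec1PerFA Unit P ∧ Lf.Finite ∧ L = P ∪ Lf := by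
  obtain ⟨Q, _, M, rfl⟩ := h
  let f := M.next ()
  let C : Set Q := {q | some q ∈ periodicPts (strictExtension f)}
  have : NeZero (Fintype.card (Option Q)).factorial := ⟨Nat.factorial_ne_zero _⟩
  have hperiodic : Periodic (· ∈ computationLengths f (M.init ∩ C) M.accept)
      (Fintype.card (Option Q)).factorial :=
    periodic_mem_computationLengths
      (fun _ hq => isPeriodicPt_factorial_card_of_mem_periodicPts hq.2) _
  have hfinite : (computationLengths f (M.init \ C) M.accept).Finite :=
    finite_computationLengths (toFinite _)
      (fun _ hq => PartialInjective.exists_iterate_eq_none_of_notMem_periodicPts (M.inj ()) hq.2) _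
  refine ⟨_, _, rec1PerFA_length_preimage hperiodic,
    hfinite.preimage' fun n _ => List.finite_length_eq Unit n, ?_⟩
  rw [← preimage_union, ← computationLengths_union_left, inter_union_sdiff,
    MRFA.language_of_next_eq_const (f := f) rfl]
end

section
/- For every sweeping reversible automaton (sRFA) there exists an sRFA recognizing the same language which on every input makes at most three passes over the input string (that is, its computation traverses the input from one end-marker to the other at most three times), and there exists an sRFA with acceptance at both sides recognizing the same language which on every input makes at most two passes. -/
open scoped Classical

/-- The set of time instants at which a computation makes a step from an
end-marker position: each such step begins a new pass over the input. -/
def SRFA.PassSet {A Qp Qm : Type} (M : SRFA A Qp Qm) (w : List A) : Set ℕ :=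
  {n | ∃ c i, M.steps w n = some (c, i) ∧ (i = 0 ∨ i = w.length + 1) ∧
    M.step w (c, i) ≠ none}

/-- The automaton makes at most `m` passes over every input string. -/
def SRFA.PassBound {A Qp Qm : Type} (M : SRFA A Qp Qm) (m : ℕ) : Prop :=
  ∀ (w : List A) (s : Finset ℕ), ↑s ⊆ M.PassSet w → s.card ≤ m

/-!
A partial injection of a finite set into itself extends to a permutation. Hence a single pass to
the right can compute a permutation `U` that extends all passes of `M` over the input at once: a
pass to the right takes its state at the left end-marker to its state at the right one by `U`, a
pass to the left takes its state at the right end-marker to its state at the left one by `U⁻¹`.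
At the right end-marker `U` determines the computation that `M` would perform if its transitions at
letters were total. If that computation does not accept, neither does `M`, and the simulation halts.
Otherwise `M` accepts if and only if all passes of that computation are defined, which a single pass
to the left verifies: it runs them all in parallel, the passes to the right being followed
backwards. A partial injection acts injectively on the sets of states contained in its domain, so
the simulation is reversible. Reaching the left end-marker means acceptance, and a third pass merely
carries this result back to the right end-marker.
-/

section PartialEquiv

variable {α β γ δ : Type*}

/-- A partial injective function, packaged with its inverse. -/
noncomputable def pequivOfInjective (f : α → Option β)
    (hf : ∀ a a' b, f a = some b → f a' = some b → a = a') : α ≃. β where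
  toFun := f
  invFun b := if h : ∃ a, f a = some b then some h.choose else none
  inv a b := by
    split_ifs with h
    · simp only [Option.some_inj]
      exact ⟨fun hab => hab ▸ h.choose_spec, fun hab => hf _ _ b h.choose_spec hab⟩
    · simpa using not_exists.1 h a

@[simp]
theorem pequivOfInjective_apply (f : α → Option β)
    (hf : ∀ a a' b, f a = some b → f a' = some b → a = a') (a : α) :
    pequivOfInjective f hf a = f a := rfl

/-- The disjoint sum of two partial injections. -/
def pequivSum (f : α ≃. β) (g : γ ≃. δ) : α ⊕ γ ≃. β ⊕ δ where
  toFun := Sum.elim (fun a => (f a).map .inl) (fun c => (g c).map .inr)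
  invFun := Sum.elim (fun b => (f.symm b).map .inl) (fun d => (g.symm d).map .inr)
  inv x y := by cases x <;> cases y <;> simp [f.eq_some_iff, g.eq_some_iff]

@[simp]
theorem pequivSum_inl (f : α ≃. β) (g : γ ≃. δ) (a : α) :
    pequivSum f g (.inl a) = (f a).map .inl := rfl

@[simp]
theorem pequivSum_symm_inr (f : α ≃. β) (g : γ ≃. δ) (d : δ) :
    (pequivSum f g).symm (.inr d) = (g.symm d).map .inr := rfl

/-- The image of a set under a partial function that is defined on all of it: it applies the
function to all elements in parallel. -/
noncomputable def definedImage (f : α → Option β) (s : Set α) : Option (Set β) :=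
  if ∀ a ∈ s, (f a).isSome then some {b | ∃ a ∈ s, f a = some b} else none

theorem definedImage_eq_some_iff {f : α → Option β} {s : Set α} {t : Set β} :
    definedImage f s = some t ↔
      (∀ a ∈ s, ∃ b ∈ t, f a = some b) ∧ ∀ b ∈ t, ∃ a ∈ s, f a = some b := by
  rw [definedImage, Option.ite_none_right_eq_some, Option.some_inj]
  constructor
  · rintro ⟨hs, rfl⟩
    refine ⟨fun a ha => ?_, fun b hb => hb⟩
    obtain ⟨b, hb⟩ := Option.isSome_iff_exists.1 (hs a ha)
    exact ⟨b, ⟨a, ha, hb⟩, hb⟩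
  · rintro ⟨hs, ht⟩
    refine ⟨fun a ha => ?_, Set.Subset.antisymm ?_ ht⟩
    · obtain ⟨b, -, hb⟩ := hs a ha
      simp [hb]
    · rintro b ⟨a, ha, hb⟩
      obtain ⟨b', hb', h⟩ := hs a ha
      obtain rfl : b = b' := by simpa [hb] using h
      exact hb'

/-- A partial injection acts injectively on the subsets of its domain, by `definedImage`. -/
noncomputable def pequivSet (f : α ≃. β) : Set α ≃. Set β where
  toFun := definedImage f
  invFun := definedImage f.symm
  inv s t := by simp only [definedImage_eq_some_iff, f.eq_some_iff, and_comm]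

@[simp]
theorem coe_pequivSet (f : α ≃. β) : ⇑(pequivSet f) = definedImage f := rfl

theorem exists_perm_extending [Finite α] (f : α ≃. α) :
    ∃ e : Equiv.Perm α, ∀ a b, f a = some b → e a = b := by
  have := Fintype.ofFinite α
  have hinj : Set.InjOn (fun a => (f a).getD a) {a | (f a).isSome} := by
    intro a ha a' ha' h
    obtain ⟨b, hb⟩ := Option.isSome_iff_exists.1 ha
    obtain ⟨b', hb'⟩ := Option.isSome_iff_exists.1 ha'
    obtain rfl : b = b' := by simpa [hb, hb'] using h
    exact f.inj hb hb'
  refine ⟨(Equiv.Set.imageOfInjOn _ _ hinj).extendSubtype, fun a b h => ?_⟩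
  rw [Equiv.extendSubtype_apply_of_mem _ a (by simp [h] : (f a).isSome)]
  simp [Equiv.Set.imageOfInjOn, h]

end PartialEquiv

section Eval

open StateTransition Relation

variable {σ : Type*} {f : σ → Option σ} {a b : σ}

theorem eval_strong_induction {P : σ → Prop} (h : b ∈ eval f a)
    (H : ∀ a, b ∈ eval f a → (∀ a', Reaches₁ f a a' → P a') → P a) : P a := by
  suffices ∀ c, Reaches f a c → P c from this a .refl
  refine evalInduction h fun a ha ih => ?_
  have later : ∀ c, Reaches₁ f a c → P c := fun c hc => by
    obtain ⟨a', haa', hc⟩ := TransGen.head'_iff.1 hc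
    exact ih a' haa' c hc
  intro c hc
  obtain rfl | hc := reflTransGen_iff_eq_or_transGen.1 hc
  exacts [H _ ha later, later c hc]

/-- The computation that alternates between the partial maps `pass` and `turn`, starting with
`pass` in the first state, halts in the second state for lack of a turn. -/
inductive HaltsAt (pass turn : σ → Option σ) : σ → σ → Prop
  | halt {s q : σ} : pass s = some q → turn q = none → HaltsAt pass turn s q
  | turn {s x s' q : σ} : pass s = some x → turn x = some s' → HaltsAt pass turn s' q →
      HaltsAt pass turn s q

variable {pass turn : σ → Option σ} {s q : σ}

theorem haltsAt_iff : HaltsAt pass turn s q ↔ ∃ x, pass s = some x ∧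
    (turn x = none ∧ q = x ∨ ∃ s', turn x = some s' ∧ HaltsAt pass turn s' q) := by
  constructor
  · rintro (⟨hs, hq⟩ | ⟨hs, hx, h⟩)
    exacts [⟨q, hs, .inl ⟨hq, rfl⟩⟩, ⟨_, hs, .inr ⟨_, hx, h⟩⟩]
  · rintro ⟨x, hs, ⟨hq, rfl⟩ | ⟨s', hx, h⟩⟩
    exacts [.halt hs hq, .turn hs hx h]

theorem haltsAt_iff_of_extends {total : σ → σ}
    (htotal : ∀ s x, pass s = some x → total s = x) :
    HaltsAt pass turn s q ↔ HaltsAt (some ∘ total) turn s q ∧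
      ∀ s', Reaches (turn ∘ total) s s' → (pass s').isSome := by
  constructor
  · intro h
    induction h with
    | @halt s q hs hq =>
      obtain rfl := htotal s q hs
      refine ⟨.halt rfl hq, fun s' hs' => ?_⟩
      obtain rfl | ⟨c, hc, -⟩ := ReflTransGen.cases_head hs'
      · simp [hs]
      · simp [hq] at hc
    | @turn s x s₁ q hs hx _ ih =>
      obtain rfl := htotal s x hs
      refine ⟨.turn rfl hx ih.1, fun s' hs' => ?_⟩
      obtain rfl | ⟨c, hc, hcs'⟩ := ReflTransGen.cases_head hs'
      · simp [hs]
      · obtain rfl : s₁ = c := by simpa [hx] using hc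
        exact ih.2 s' hcs'
  · rintro ⟨h, hdef⟩
    have pass_eq : ∀ s', Reaches (turn ∘ total) s s' → pass s' = some (total s') := by
      intro s' hs'
      obtain ⟨x, hx⟩ := Option.isSome_iff_exists.1 (hdef s' hs')
      rw [hx, htotal s' x hx]
    clear hdef
    induction h with
    | halt hs hq => exact .halt ((pass_eq _ .refl).trans hs) hq
    | turn hs hx _ ih =>
      obtain rfl := Option.some_inj.1 hs
      exact .turn (pass_eq _ .refl) hx (ih fun s' hs' => pass_eq s' (hs'.head hx))

end Eval

section RunP

variable {A Q Q' : Type}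

theorem runP_nil (d : A → Q → Option Q) (q : Q) : runP d q [] = some q := rfl

theorem runP_cons (d : A → Q → Option Q) (q : Q) (a : A) (w : List A) :
    runP d q (a :: w) = (d a q).bind fun r => runP d r w := by
  cases h : d a q with
  | none =>
    have foldl_none : w.foldl (fun o a => o.bind (d a)) none = none := by
      induction w with
      | nil => rfl
      | cons _ _ ih => exact ih
    simp [runP, h, foldl_none]
  | some r => simp [runP, h]

theorem runP_concat (d : A → Q → Option Q) (q : Q) (w : List A) (a : A) :
    runP d q (w ++ [a]) = (runP d q w).bind (d a) := by
  simp [runP]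

theorem runP_some (k : A → Q → Q) (q : Q) (w : List A) :
    runP (fun a q => some (k a q)) q w = some (w.foldl (fun q a => k a q) q) := by
  induction w generalizing q with
  | nil => rfl
  | cons a w ih => rw [runP_cons]; exact ih _

theorem runP_map {d : A → Q → Option Q} {d' : A → Q' → Option Q'} {g : Q → Q'}
    (h : ∀ a q, d' a (g q) = (d a q).map g) (q : Q) (w : List A) :
    runP d' (g q) w = (runP d q w).map g := by
  induction w generalizing q with
  | nil => rfl
  | cons a w ih =>
    rw [runP_cons, runP_cons, h]
    cases d a q <;> simp [ih]

theorem runP_symm_reverse_eq_some_iff (f : A → Q ≃. Q) (p q : Q) (w : List A) :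
    runP (fun a => (f a).symm) q w.reverse = some p ↔ runP (fun a => f a) p w = some q := by
  induction w generalizing p with
  | nil => simp [runP_nil, eq_comm]
  | cons a w ih =>
    simp only [List.reverse_cons, runP_concat, runP_cons, Option.bind_eq_some_iff, ih,
      (f a).eq_some_iff, and_comm]

theorem isSome_runP_definedImage_iff (d : A → Q → Option Q) (s : Set Q) (w : List A) :
    (runP (fun a => definedImage (d a)) s w).isSome ↔ ∀ q ∈ s, (runP d q w).isSome := by
  induction w generalizing s with
  | nil => simp [runP_nil]
  | cons a w ih =>
    rw [runP_cons]
    simp only [runP_cons]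
    by_cases hs : ∀ q ∈ s, (d a q).isSome
    · rw [definedImage, if_pos hs, Option.bind_some, ih]
      constructor
      · intro h q hq
        obtain ⟨r, hr⟩ := Option.isSome_iff_exists.1 (hs q hq)
        simpa [hr] using h r ⟨q, hq, hr⟩
      · rintro h r ⟨q, hq, hr⟩
        simpa [hr] using h q hq
    · rw [definedImage, if_neg hs]
      refine iff_of_false (by simp) fun h => hs fun q hq => ?_
      exact Option.isSome_of_isSome_bind (h q hq)

/-- The composite of the permutations assigned to the letters of a word, the first letter
acting first. -/
def wordPerm (u : A → Equiv.Perm Q) (w : List A) : Equiv.Perm Q :=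
  w.foldl (fun s a => u a * s) 1

theorem wordPerm_apply_of_runP {d : A → Q → Option Q} {u : A → Equiv.Perm Q}
    (hu : ∀ a q r, d a q = some r → u a q = r) {q r : Q} {w : List A}
    (h : runP d q w = some r) : wordPerm u w q = r := by
  induction w using List.reverseRecOn generalizing r with
  | nil => exact Option.some_inj.1 h
  | append_singleton w a ih =>
    rw [runP_concat, Option.bind_eq_some_iff] at h
    obtain ⟨x, hx, hr⟩ := h
    simp [wordPerm, ← ih hx, ← hu a _ _ hr]

end RunP

namespace SRFA

open StateTransition Relation

section Passes

variable {A Qp Qm : Type}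

/-- The configuration in which a pass over `w` begins in a given state, just after the
end-marker step. -/
def passStart (w : List A) (s : Qp ⊕ Qm) : (Qp ⊕ Qm) × ℕ :=
  (s, s.elim (fun _ => 1) fun _ => w.length)

/-- The configuration in which a pass over `w` reaches the opposite end-marker in a given
state. -/
def passEnd (w : List A) (s : Qp ⊕ Qm) : (Qp ⊕ Qm) × ℕ :=
  (s, s.elim (fun _ => w.length + 1) fun _ => 0)

theorem passEnd_snd (w : List A) (s : Qp ⊕ Qm) :
    (passEnd w s).2 = 0 ∨ (passEnd w s).2 = w.length + 1 := by
  cases s <;> simp [passEnd]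

variable (M : SRFA A Qp Qm) (F : Set Qp)

/-- The state at the end of a pass over `w` as a partial function of the state at its
beginning. -/
def pass (w : List A) : Qp ⊕ Qm → Option (Qp ⊕ Qm)
  | .inl p => (runP M.nextP p w).map .inl
  | .inr r => (runP M.nextM r w.reverse).map .inr

/-- The end-marker transition between the end of a pass and the beginning of the next one. -/
def turn : Qp ⊕ Qm → Option (Qp ⊕ Qm)
  | .inl p => (M.turnR p).map .inr
  | .inr r => (M.turnL r).map .inl

theorem step_passEnd (w : List A) (q : Qp ⊕ Qm) :
    M.step w (passEnd w q) = (M.turn q).map (passStart w) := by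
  cases q <;> simp [passEnd, step, turn, passStart, Function.comp_def]

theorem reaches_inl_append_iff {c : (Qp ⊕ Qm) × ℕ} (u v : List A)
    (hc : c.2 = 0 ∨ c.2 = (u ++ v).length + 1) (p : Qp) :
    Reaches (M.step (u ++ v)) (.inl p, u.length + 1) c ↔
      ∃ q, runP M.nextP p v = some q ∧
        Reaches (M.step (u ++ v)) (.inl q, (u ++ v).length + 1) c := by
  induction v generalizing u p with
  | nil => simp [runP_nil]
  | cons a v ih =>
    have step_eq : M.step (u ++ a :: v) (.inl p, u.length + 1) =
        (M.nextP a p).map fun q => (.inl q, u.length + 1 + 1) := by simp [step]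
    have not_end : (.inl p, u.length + 1) ≠ c := by
      rintro rfl
      simp at hc
    rw [Reaches, ReflTransGen.cases_head_iff, or_iff_right not_end, runP_cons, step_eq]
    have later := ih (u ++ [a]) (by simpa using hc)
    simp only [List.append_assoc, List.singleton_append, List.length_append, List.length_cons,
      List.length_nil, zero_add, ← add_assoc] at later
    cases M.nextP a p with
    | none => simp
    | some q => simpa [Reaches, ← add_assoc] using later q

theorem reaches_inr_append_iff {c : (Qp ⊕ Qm) × ℕ} (u v : List A)
    (hc : c.2 = 0 ∨ c.2 = (u ++ v).length + 1) (r : Qm) :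
    Reaches (M.step (u ++ v)) (.inr r, u.length) c ↔
      ∃ s, runP M.nextM r u.reverse = some s ∧ Reaches (M.step (u ++ v)) (.inr s, 0) c := by
  induction u using List.reverseRecOn generalizing v r with
  | nil => simp [runP_nil]
  | append_singleton u a ih =>
    rw [List.append_assoc, List.singleton_append] at hc ⊢
    have step_eq : M.step (u ++ a :: v) (.inr r, (u ++ [a]).length) =
        (M.nextM a r).map fun s => (.inr s, u.length) := by simp [step]
    have not_end : (.inr r, (u ++ [a]).length) ≠ c := by
      rintro rfl
      simp at hc
    rw [Reaches, ReflTransGen.cases_head_iff, or_iff_right not_end, List.reverse_concat,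
      runP_cons, step_eq]
    cases M.nextM a r with
    | none => simp
    | some s => simpa [Reaches] using ih (a :: v) hc s

theorem reaches_passStart_iff {w : List A} {c : (Qp ⊕ Qm) × ℕ}
    (hc : c.2 = 0 ∨ c.2 = w.length + 1) (s : Qp ⊕ Qm) :
    Reaches (M.step w) (passStart w s) c ↔
      ∃ q, M.pass w s = some q ∧ Reaches (M.step w) (passEnd w q) c := by
  cases s with
  | inl p => simpa [passStart, passEnd, pass] using M.reaches_inl_append_iff [] w hc p
  | inr r =>
    simpa [passStart, passEnd, pass] using
      M.reaches_inr_append_iff w [] (by simpa using hc) r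

theorem mem_eval_passStart_iff_haltsAt {w : List A} {c : (Qp ⊕ Qm) × ℕ}
    (hc : c.2 = 0 ∨ c.2 = w.length + 1) (s : Qp ⊕ Qm) :
    c ∈ eval (M.step w) (passStart w s) ↔
      ∃ q, HaltsAt (M.pass w) M.turn s q ∧ c = passEnd w q := by
  constructor
  · intro h
    refine eval_strong_induction (P := fun a => ∀ s, a = passStart w s →
      ∃ q, HaltsAt (M.pass w) M.turn s q ∧ c = passEnd w q) h ?_ s rfl
    rintro _ h ih s rfl
    obtain ⟨hreach, hhalt⟩ := mem_eval.1 h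
    obtain ⟨q, hq, hreach⟩ := (M.reaches_passStart_iff hc s).1 hreach
    obtain rfl | ⟨d, hd, -⟩ := hreach.cases_head
    · exact ⟨q, .halt hq (by simpa [step_passEnd] using hhalt), rfl⟩
    rw [step_passEnd, Option.mem_def, Option.map_eq_some_iff] at hd
    obtain ⟨s', hs', rfl⟩ := hd
    have next_pass : Reaches₁ (M.step w) (passStart w s) (passStart w s') :=
      .tail' ((M.reaches_passStart_iff (passEnd_snd w q) s).2 ⟨q, hq, .refl⟩)
        (by simp [step_passEnd, hs'])
    obtain ⟨q', hq', rfl⟩ := ih _ next_pass s' rfl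
    exact ⟨q', .turn hq hs' hq', rfl⟩
  · rintro ⟨q, h, rfl⟩
    induction h with
    | @halt s q hs hq =>
      exact mem_eval.2 ⟨(M.reaches_passStart_iff hc s).2 ⟨q, hs, .refl⟩, by
        simp [step_passEnd, hq]⟩
    | @turn s x s' q hs hx _ ih =>
      obtain ⟨hreach, hhalt⟩ := mem_eval.1 (ih hc)
      refine mem_eval.2 ⟨(M.reaches_passStart_iff hc s).2 ⟨x, hs, hreach.head ?_⟩, hhalt⟩
      simp [step_passEnd, hx]

theorem exists_steps_eq_some_iff (w : List A) (c : (Qp ⊕ Qm) × ℕ) :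
    (∃ n, M.steps w n = some c) ↔ Reaches (M.step w) (.inl M.start, 0) c := by
  constructor
  · rintro ⟨n, hn⟩
    induction n generalizing c with
    | zero => exact Option.some_inj.1 hn ▸ .refl
    | succ n ih =>
      obtain ⟨d, hd, hdc⟩ := Option.bind_eq_some_iff.1 hn
      exact (ih d hd).tail hdc
  · intro h
    induction h with
    | refl => exact ⟨0, rfl⟩
    | tail _ hdc ih =>
      obtain ⟨n, hn⟩ := ih
      exact ⟨n + 1, Option.bind_eq_some_iff.2 ⟨_, hn, hdc⟩⟩

theorem acceptsR_iff_mem_eval (w : List A) : M.AcceptsR F w ↔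
    ∃ q ∈ F, (.inl q, w.length + 1) ∈ eval (M.step w) (.inl M.start, 0) := by
  simp only [AcceptsR, mem_eval, ← exists_steps_eq_some_iff]
  grind

theorem acceptsB_iff_mem_eval (F : Set (Qp ⊕ Qm)) (w : List A) : M.AcceptsB F w ↔
    ∃ q ∈ F, ∃ i, (i = 0 ∨ i = w.length + 1) ∧
      (q, i) ∈ eval (M.step w) (.inl M.start, 0) := by
  simp only [AcceptsB, mem_eval, ← exists_steps_eq_some_iff]
  grind

theorem eval_start {p : Qp} (hp : M.startT = some p) (w : List A) :
    eval (M.step w) (.inl M.start, 0) = eval (M.step w) (passStart w (.inl p)) :=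
  reaches_eval (.single (by simp [step, passStart, hp]))

/-- Acceptance by the computation whose passes act on the states as the partial map `φ`. -/
def AcceptsVia (φ : Qp ⊕ Qm → Option (Qp ⊕ Qm)) : Prop :=
  ∃ p, M.startT = some p ∧ ∃ q ∈ F, HaltsAt φ M.turn (.inl p) (.inl q)

theorem acceptsR_iff_acceptsVia (w : List A) :
    M.AcceptsR F w ↔ M.AcceptsVia F (M.pass w) := by
  rw [acceptsR_iff_mem_eval, AcceptsVia]
  cases hp : M.startT with
  | none =>
    have halted : M.step w (.inl M.start, 0) = none := by simp [step, hp]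
    refine iff_of_false ?_ (by simp)
    rintro ⟨q, -, h⟩
    obtain h | ⟨d, hd, -⟩ := (mem_eval.1 h).1.cases_head
    · simp at h
    · simp [halted] at hd
  | some p =>
    have mem_eval_iff (q : Qp) := M.mem_eval_passStart_iff_haltsAt
      (c := (.inl q, w.length + 1)) (.inr rfl) (.inl p)
    simp [M.eval_start hp, mem_eval_iff, passEnd]

theorem acceptsB_iff_haltsAt {p : Qp} (hp : M.startT = some p) (F : Set (Qp ⊕ Qm))
    (w : List A) :
    M.AcceptsB F w ↔ ∃ q ∈ F, HaltsAt (M.pass w) M.turn (.inl p) q := by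
  rw [acceptsB_iff_mem_eval, M.eval_start hp]
  constructor
  · rintro ⟨q, hq, i, hi, h⟩
    obtain ⟨q', h, hc⟩ := (M.mem_eval_passStart_iff_haltsAt hi _).1 h
    obtain rfl : q = q' := congrArg Prod.fst hc
    exact ⟨q, hq, h⟩
  · rintro ⟨q, hq, h⟩
    have at_end := passEnd_snd w q
    exact ⟨q, hq, _, at_end, (M.mem_eval_passStart_iff_haltsAt at_end _).2 ⟨q, h, rfl⟩⟩

end Passes

section Totalisation

variable {A Qp Qm : Type} (M : SRFA A Qp Qm) (F : Set Qp)

/-- The states in which the passes begin in the computation whose passes act on the states as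
the total map `total`. -/
def visits (total : Qp ⊕ Qm → Qp ⊕ Qm) : Set (Qp ⊕ Qm) :=
  {s | ∃ p, M.startT = some p ∧ Reaches (M.turn ∘ total) (.inl p) s}

theorem acceptsVia_iff_of_extends {φ : Qp ⊕ Qm → Option (Qp ⊕ Qm)} {total : Qp ⊕ Qm → Qp ⊕ Qm}
    (htotal : ∀ s x, φ s = some x → total s = x) :
    M.AcceptsVia F φ ↔
      M.AcceptsVia F (some ∘ total) ∧ ∀ s ∈ M.visits total, (φ s).isSome := by
  simp only [AcceptsVia, visits, haltsAt_iff_of_extends htotal]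
  cases M.startT <;> simp [← and_assoc]

/-- The action of a letter on passes: it sends the state of a pass at the left of the letter to
the state of the same pass at the right, so that a pass to the left is followed backwards. -/
noncomputable def cross (a : A) : Qp ⊕ Qm ≃. Qp ⊕ Qm :=
  pequivSum (pequivOfInjective (M.nextP a) (M.injP a))
    (pequivOfInjective (M.nextM a) (M.injM a)).symm

theorem runP_cross_inl (w : List A) (p : Qp) :
    runP (fun a => M.cross a) (.inl p) w = M.pass w (.inl p) :=
  runP_map (by simp [cross]) p w

theorem runP_cross_symm_inr (w : List A) (r : Qm) :
    runP (fun a => (M.cross a).symm) (.inr r) w.reverse = M.pass w (.inr r) :=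
  runP_map (by simp [cross]) r w.reverse

/-- The state at the end of a pass, if the states of a pass at the left end-marker are mapped to
those at the right one by `U`. -/
def totalPass (U : Equiv.Perm (Qp ⊕ Qm)) : Qp ⊕ Qm → Qp ⊕ Qm
  | .inl p => U (.inl p)
  | .inr r => U.symm (.inr r)

/-- The state at the right end-marker of the pass beginning in a given state, with `U` as in
`totalPass`. -/
def rightEnd (U : Equiv.Perm (Qp ⊕ Qm)) : Qp ⊕ Qm → Qp ⊕ Qm
  | .inl p => U (.inl p)
  | .inr r => .inr r

variable {M} {u : A → Equiv.Perm (Qp ⊕ Qm)} (hu : ∀ a s x, M.cross a s = some x → u a s = x)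
include hu

theorem totalPass_wordPerm_eq_of_pass (w : List A) (s x : Qp ⊕ Qm)
    (h : M.pass w s = some x) : totalPass (wordPerm u w) s = x := by
  cases s with
  | inl p => exact wordPerm_apply_of_runP hu ((M.runP_cross_inl w p).trans h)
  | inr r =>
    rw [← runP_cross_symm_inr, runP_symm_reverse_eq_some_iff] at h
    exact (Equiv.symm_apply_eq _).2 (wordPerm_apply_of_runP hu h).symm

theorem isSome_runP_cross_symm_rightEnd_iff (w : List A) (s : Qp ⊕ Qm) :
    (runP (fun a => (M.cross a).symm) (rightEnd (wordPerm u w) s) w.reverse).isSome ↔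
      (M.pass w s).isSome := by
  cases s with
  | inl p =>
    simp only [rightEnd, ← runP_cross_inl, Option.isSome_iff_exists,
      runP_symm_reverse_eq_some_iff]
    constructor
    · rintro ⟨x, hx⟩
      obtain rfl := (wordPerm u w).injective (wordPerm_apply_of_runP hu hx)
      exact ⟨_, hx⟩
    · rintro ⟨y, hy⟩
      exact ⟨.inl p, by rwa [wordPerm_apply_of_runP hu hy]⟩
  | inr r => rw [rightEnd, runP_cross_symm_inr]

theorem acceptsR_iff_wordPerm (w : List A) :
    M.AcceptsR F w ↔ M.AcceptsVia F (some ∘ totalPass (wordPerm u w)) ∧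
      (runP (fun a => pequivSet (M.cross a).symm)
        (rightEnd (wordPerm u w) '' M.visits (totalPass (wordPerm u w))) w.reverse).isSome := by
  simp only [acceptsR_iff_acceptsVia,
    M.acceptsVia_iff_of_extends F (totalPass_wordPerm_eq_of_pass hu w), coe_pequivSet,
    isSome_runP_definedImage_iff, Set.forall_mem_image, isSome_runP_cross_symm_rightEnd_iff hu]

end Totalisation

section PassBound

variable {A Qp Qm : Type} {M : SRFA A Qp Qm} {rank : (Qp ⊕ Qm) × ℕ → ℕ}

theorem count_passSet_le_rank {w : List A}
    (mono : ∀ c c', M.step w c = some c' → rank c ≤ rank c')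
    (strict : ∀ c c', M.step w c = some c' → c.2 = 0 ∨ c.2 = w.length + 1 → rank c < rank c')
    {n : ℕ} {c : (Qp ⊕ Qm) × ℕ} (hc : M.steps w n = some c) :
    Nat.count (· ∈ M.PassSet w) n ≤ rank c := by
  induction n generalizing c with
  | zero => simp
  | succ n ih =>
    obtain ⟨b, hb, hbc⟩ := Option.bind_eq_some_iff.1 hc
    rw [Nat.count_succ]
    split_ifs with hn
    · obtain ⟨s, i, hsi, hi, -⟩ := hn
      obtain rfl : b = (s, i) := Option.some_inj.1 (hb.symm.trans hsi)
      exact (ih hb).trans_lt (strict _ c hbc hi)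
    · exact (ih hb).trans (mono b c hbc)

theorem passBound_of_rank {m : ℕ}
    (mono : ∀ w c c', M.step w c = some c' → rank c ≤ rank c')
    (strict : ∀ w c c', M.step w c = some c' → c.2 = 0 ∨ c.2 = w.length + 1 →
      rank c < rank c' ∧ rank c < m) :
    M.PassBound m := by
  intro w s hs
  obtain rfl | hne := s.eq_empty_or_nonempty
  · simp
  obtain ⟨q, i, hc, hi, hstep⟩ := hs (s.max'_mem hne)
  obtain ⟨c', hc'⟩ := Option.ne_none_iff_exists'.1 hstep
  have count_le := count_passSet_le_rank (mono w) (fun b b' h hb => (strict w b b' h hb).1) hc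
  calc s.card ≤ Nat.count (· ∈ M.PassSet w) (s.max' hne + 1) := by
        rw [Nat.count_eq_card_filter_range]
        exact Finset.card_le_card fun n hn =>
          Finset.mem_filter.2 ⟨Finset.mem_range_succ_iff.2 (s.le_max' n hn), hs hn⟩
    _ ≤ Nat.count (· ∈ M.PassSet w) (s.max' hne) + 1 := by
        rw [Nat.count_succ]
        gcongr
        split_ifs <;> simp
    _ ≤ m := (Nat.succ_le_succ count_le).trans (strict w _ c' hc' hi).2

end PassBound

section TwoPhase

variable {A S C : Type}

/-- The automaton that sweeps right by the permutations `right`, converts its state by `check`,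
sweeps left by the partial injections `left` and, if `third` holds, sweeps right once more without
changing its state. The result of the first pass is stored until the end, which makes the
conversion injective for every `check`. -/
def twoPhase (s₀ : S) (right : A → Equiv.Perm S) (check : S → Option C) (left : A → C ≃. C)
    (third : Bool) : SRFA A (S ⊕ S × C) (S × C) where
  start := .inl s₀
  nextP a := Sum.elim (fun s => some (.inl (right a s))) fun t => some (.inr t)
  nextM a t := (left a t.2).map (t.1, ·)
  startT := some (.inl s₀)
  turnL t := if third then some (.inr t) else none
  turnR := Sum.elim (fun s => (check s).map (s, ·)) fun _ => none
  injP := by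
    rintro a (s | t) (s' | t') r h h' <;> cases h' <;> simp_all
  injM := by
    rintro a ⟨s, c⟩ ⟨s', c'⟩ r h h'
    obtain ⟨d, hd, rfl⟩ := Option.map_eq_some_iff.1 h
    obtain ⟨d', hd', h⟩ := Option.map_eq_some_iff.1 h'
    obtain ⟨rfl, rfl⟩ := Prod.mk.inj h
    exact congrArg _ ((left a).inj hd hd')
  injL := by
    rintro t t' r h h'
    split_ifs at h h'
    cases h'
    simpa using h
  injR := by
    rintro (s | t) (s' | t') r h h' <;> simp at h h'
    grind
  startT_ne_turnL := by
    rintro t r h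
    simp [← Option.some_inj.1 h]

variable (s₀ : S) (right : A → Equiv.Perm S) (check : S → Option C) (left : A → C ≃. C)
  (third : Bool)

theorem pass_twoPhase_inl_inl (w : List A) (s : S) :
    (twoPhase s₀ right check left third).pass w (.inl (.inl s)) =
      some (.inl (.inl (w.foldl (fun s a => right a s) s))) := by
  have := runP_map (d := fun a s => some (right a s))
    (d' := (twoPhase s₀ right check left third).nextP) (g := .inl) (fun _ _ => rfl) s w
  simp [pass, this, runP_some fun a s => right a s]

theorem pass_twoPhase_inl_inr (w : List A) (t : S × C) :
    (twoPhase s₀ right check left third).pass w (.inl (.inr t)) = some (.inl (.inr t)) := by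
  have := runP_map (d := fun _ t => some t)
    (d' := (twoPhase s₀ right check left third).nextP) (g := .inr) (fun _ _ => rfl) t w
  simp [pass, this, runP_some fun _ t => t]

theorem pass_twoPhase_inr (w : List A) (s : S) (c : C) :
    (twoPhase s₀ right check left third).pass w (.inr (s, c)) =
      (runP (fun a => left a) c w.reverse).map fun c' => .inr (s, c') := by
  have := runP_map (d' := (twoPhase s₀ right check left third).nextM) (g := (s, ·))
    (fun _ _ => rfl) c w.reverse
  simp [pass, this, Function.comp_def]

theorem haltsAt_twoPhase_inl_inr_iff (w : List A) (t : S × C) (q : (S ⊕ S × C) ⊕ S × C) :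
    HaltsAt ((twoPhase s₀ right check left third).pass w)
        (twoPhase s₀ right check left third).turn (.inl (.inr t)) q ↔ q = .inl (.inr t) := by
  rw [haltsAt_iff, pass_twoPhase_inl_inr]
  simp [turn, twoPhase]

theorem haltsAt_twoPhase_iff (w : List A) (q : (S ⊕ S × C) ⊕ S × C) :
    HaltsAt ((twoPhase s₀ right check left third).pass w)
        (twoPhase s₀ right check left third).turn (.inl (.inl s₀)) q ↔
      ∃ s, w.foldl (fun s a => right a s) s₀ = s ∧
        (check s = none ∧ q = .inl (.inl s) ∨
          ∃ c, check s = some c ∧ ∃ c', runP (fun a => left a) c w.reverse = some c' ∧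
            q = if third then .inl (.inr (s, c')) else .inr (s, c')) := by
  rw [haltsAt_iff]
  simp only [pass_twoPhase_inl_inl, Option.some_inj, exists_eq_left']
  generalize w.foldl (fun s a => right a s) s₀ = s
  cases hs : check s with
  | none => simp [turn, twoPhase, hs]
  | some c =>
    have turn_eq : (twoPhase s₀ right check left third).turn (.inl (.inl s)) =
        some (.inr (s, c)) := by simp [turn, twoPhase, hs]
    simp only [turn_eq, reduceCtorEq, false_and, false_or, Option.some_inj, exists_eq_left']
    rw [haltsAt_iff, pass_twoPhase_inr]
    cases runP (fun a => left a) c w.reverse with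
    | none => simp
    | some c' =>
      cases third with
      | false => simp [turn, twoPhase]
      | true =>
        have turn_eq : (twoPhase s₀ right check left true).turn (.inr (s, c')) =
            some (.inl (.inr (s, c'))) := rfl
        simp [turn_eq, haltsAt_twoPhase_inl_inr_iff]

theorem acceptsR_twoPhase_iff (w : List A) :
    (twoPhase s₀ right check left true).AcceptsR (Set.range .inr) w ↔
      ∃ c, check (w.foldl (fun s a => right a s) s₀) = some c ∧
        (runP (fun a => left a) c w.reverse).isSome := by
  have start : (twoPhase s₀ right check left true).startT = some (.inl s₀) := rfl
  simp only [acceptsR_iff_acceptsVia, AcceptsVia, start, Option.some_inj, exists_eq_left',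
    haltsAt_twoPhase_iff, Option.isSome_iff_exists]
  grind

theorem acceptsB_twoPhase_iff (w : List A) :
    (twoPhase s₀ right check left false).AcceptsB (Set.range .inr) w ↔
      ∃ c, check (w.foldl (fun s a => right a s) s₀) = some c ∧
        (runP (fun a => left a) c w.reverse).isSome := by
  have start : (twoPhase s₀ right check left false).startT = some (.inl s₀) := rfl
  simp only [acceptsB_iff_haltsAt _ start, haltsAt_twoPhase_iff, Option.isSome_iff_exists]
  grind

/-- The number of passes begun before a configuration of a two-phase automaton. -/
def twoPhaseRank : ((S ⊕ S × C) ⊕ S × C) × ℕ → ℕ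
  | (.inl (.inl _), i) => if i = 0 then 0 else 1
  | (.inr _, _) => 2
  | (.inl (.inr _), _) => 3

theorem twoPhaseRank_step {w : List A} {c c' : ((S ⊕ S × C) ⊕ S × C) × ℕ}
    (h : (twoPhase s₀ right check left third).step w c = some c') :
    twoPhaseRank c ≤ twoPhaseRank c' ∧ (c.2 = 0 ∨ c.2 = w.length + 1 →
      twoPhaseRank c < twoPhaseRank c' ∧ twoPhaseRank c < if third then 3 else 2) := by
  obtain ⟨(q | q) | q, i⟩ := c <;> simp only [step] at h <;> split_ifs at h <;>
    simp [twoPhase, Option.bind_eq_some_iff] at h <;> grind [twoPhaseRank, twoPhase]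

theorem passBound_twoPhase :
    (twoPhase s₀ right check left third).PassBound (if third then 3 else 2) :=
  passBound_of_rank (fun _ _ _ h => (twoPhaseRank_step s₀ right check left third h).1)
    fun _ _ _ h => (twoPhaseRank_step s₀ right check left third h).2

end TwoPhase

section Verifier

variable {A Qp Qm : Type} (M : SRFA A Qp Qm) (F : Set Qp) (u : A → Equiv.Perm (Qp ⊕ Qm))

/-- The set of the states that the passes of the total computation given by `U` have at the right
end-marker, provided that this computation accepts. -/
noncomputable def rightEnds (U : Equiv.Perm (Qp ⊕ Qm)) : Option (Set (Qp ⊕ Qm)) :=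
  if M.AcceptsVia F (some ∘ totalPass U) then some (rightEnd U '' M.visits (totalPass U)) else none

/-- The two-phase automaton that computes `wordPerm u w` while sweeping right over `w` and checks
while sweeping left that all passes of the resulting total computation are defined. -/
noncomputable def verifier (third : Bool) :
    SRFA A (Equiv.Perm (Qp ⊕ Qm) ⊕ Equiv.Perm (Qp ⊕ Qm) × Set (Qp ⊕ Qm))
      (Equiv.Perm (Qp ⊕ Qm) × Set (Qp ⊕ Qm)) :=
  twoPhase 1 (fun a => Equiv.mulLeft (u a)) (M.rightEnds F)
    (fun a => pequivSet (M.cross a).symm) third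

theorem passBound_verifier (third : Bool) :
    (M.verifier F u third).PassBound (if third then 3 else 2) :=
  passBound_twoPhase _ _ _ _ third

variable {M u} (hu : ∀ a s x, M.cross a s = some x → u a s = x)
include hu

theorem acceptsR_iff_exists_rightEnds (w : List A) :
    M.AcceptsR F w ↔ ∃ C, M.rightEnds F (wordPerm u w) = some C ∧
      (runP (fun a => pequivSet (M.cross a).symm) C w.reverse).isSome := by
  simp only [acceptsR_iff_wordPerm F hu, rightEnds, Option.ite_none_right_eq_some,
    Option.some_inj]
  grind

theorem langR_verifier : (M.verifier F u true).LangR (Set.range .inr) = M.LangR F :=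
  Set.ext fun w => (acceptsR_twoPhase_iff ..).trans (acceptsR_iff_exists_rightEnds F hu w).symm

theorem langB_verifier : (M.verifier F u false).LangB (Set.range .inr) = M.LangR F :=
  Set.ext fun w => (acceptsB_twoPhase_iff ..).trans (acceptsR_iff_exists_rightEnds F hu w).symm

end Verifier

end SRFA

/-- every sRFA is equivalent to an sRFA making at most three
passes over the input, and to an sRFA with acceptance at both sides making at
most two passes. -/
theorem stmt15 (A Qp Qm : Type) [Fintype Qp] [Fintype Qm]
    (M : SRFA A Qp Qm) (F : Set Qp) :
    (∃ (Qp' Qm' : Type) (_ : Fintype Qp') (_ : Fintype Qm')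
        (N : SRFA A Qp' Qm') (F' : Set Qp'),
        N.LangR F' = M.LangR F ∧ N.PassBound 3) ∧
    (∃ (Qp' Qm' : Type) (_ : Fintype Qp') (_ : Fintype Qm')
        (N : SRFA A Qp' Qm') (F' : Set (Qp' ⊕ Qm')),
        N.LangB F' = M.LangR F ∧ N.PassBound 2) := by
  obtain ⟨u, hu⟩ := Classical.axiomOfChoice fun a => exists_perm_extending (M.cross a)
  exact ⟨⟨_, _, inferInstance, inferInstance, M.verifier F u true, _,
      SRFA.langR_verifier F hu, M.passBound_verifier F u true⟩,
    ⟨_, _, inferInstance, inferInstance, M.verifier F u false, _,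
      SRFA.langB_verifier F hu, M.passBound_verifier F u false⟩⟩
end
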